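/- Existence of the position derivative as a commutator: let α > 1+ϑ and u∈C^α. Then for every i=1,…,d and every z=(t,x,v)∈ℝ×ℝ^{2d}, the limit of the difference quotient (u(t, x+δe_i, v) − u(t,x,v))/δ as δ→0 exists and equals [Z_i,Y]u(z) := Z_i(Yu)(z) − Y(Z_i u)(z); in other words ∂_{x_i}u exists everywhere and ∂_{x_i}u = [Z_i,Y]u. Moreover ∂_{x_i}u ∈ C^{α−(ϑ+1)}. -/

import Mathlib

noncomputable section
open scoped BigOperators ENNReal

/-- Points of the Galilean group `ℝ × ℝ^d × ℝ^d`, written `z = (t, x, v)`. -/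
abbrev Pt (d : ℕ) := ℝ × EuclideanSpace ℝ (Fin d) × EuclideanSpace ℝ (Fin d)

variable {d : ℕ}

/-- Flow of the drift field `Y = ⟨v, ∇ₓ⟩ + ∂ₜ`. -/
def flowY (τ : ℝ) (z : Pt d) : Pt d := (z.1 + τ, z.2.1 + τ • z.2.2, z.2.2)

/-- Flow of the field `Z_h = ⟨h, ∇_v⟩`. -/
def flowZ (h : EuclideanSpace ℝ (Fin d)) (τ : ℝ) (z : Pt d) : Pt d :=
  (z.1, z.2.1, z.2.2 + τ • h)

/-- Flow of the constant field `⟨h, ∇ₓ⟩`. -/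
def flowX (h : EuclideanSpace ℝ (Fin d)) (τ : ℝ) (z : Pt d) : Pt d :=
  (z.1, z.2.1 + τ • h, z.2.2)

/-- `u` has a Lie derivative at `z` along the flow `φ`. -/
def HasLieAt (φ : ℝ → Pt d → Pt d) (u : Pt d → ℝ) (z : Pt d) : Prop :=
  DifferentiableAt ℝ (fun τ => u (φ τ z)) 0

/-- Lie derivative along `Y` (junk value if it does not exist). -/
def lieY (u : Pt d → ℝ) (z : Pt d) : ℝ := deriv (fun τ => u (flowY τ z)) 0

/-- Partial derivative `∂_{v_i}` as a Lie derivative along `Z_i`. -/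
def dv (i : Fin d) (u : Pt d → ℝ) (z : Pt d) : ℝ :=
  deriv (fun τ => u (flowZ (EuclideanSpace.single i 1) τ z)) 0

/-- Partial derivative `∂_{x_i}`. -/
def dx (i : Fin d) (u : Pt d → ℝ) (z : Pt d) : ℝ :=
  deriv (fun τ => u (flowX (EuclideanSpace.single i 1) τ z)) 0

/-- The list of indices associated to a multi-index `β` (index `i` repeated `β i` times). -/
def idxList (β : Fin d → ℕ) : List (Fin d) := (List.ofFn fun i => List.replicate (β i) i).flatten

/-- Iterated application of first-order operators along a list of indices. -/
def derivList (D : Fin d → (Pt d → ℝ) → Pt d → ℝ) : List (Fin d) → (Pt d → ℝ) → Pt d → ℝ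
  | [], u => u
  | i :: l, u => D i (derivList D l u)

/-- `∂_v^β u`. -/
def dvPow (β : Fin d → ℕ) (u : Pt d → ℝ) : Pt d → ℝ := derivList dv (idxList β) u

/-- `∂_x^γ u`. -/
def dxPow (γ : Fin d → ℕ) (u : Pt d → ℝ) : Pt d → ℝ := derivList dx (idxList γ) u

/-- All the intermediate derivatives in an iterated derivative exist at every point. -/
def ExistsDList (φ : Fin d → ℝ → Pt d → Pt d) (D : Fin d → (Pt d → ℝ) → Pt d → ℝ) :
    List (Fin d) → (Pt d → ℝ) → Prop
  | [], _ => True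
  | i :: l, u => ExistsDList φ D l u ∧ ∀ z, HasLieAt (φ i) (derivList D l u) z

/-- `∂_v^β u` exists (at every point, at every stage). -/
def ExistsDvPow (β : Fin d → ℕ) (u : Pt d → ℝ) : Prop :=
  ExistsDList (fun i => flowZ (EuclideanSpace.single i 1)) dv (idxList β) u

/-- `∂_x^γ u` exists (at every point, at every stage). -/
def ExistsDxPow (γ : Fin d → ℕ) (u : Pt d → ℝ) : Prop :=
  ExistsDList (fun i => flowX (EuclideanSpace.single i 1)) dx (idxList γ) u

/-- The iterated Lie derivatives `Y^j u`, `j = 1, …, k`, exist at every point. -/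
def ExistsLieYIter (u : Pt d → ℝ) : ℕ → Prop
  | 0 => True
  | k + 1 => ExistsLieYIter u k ∧ ∀ z : Pt d, HasLieAt flowY (lieY^[k] u) z

/-- Hölder seminorm `‖u‖_{C^α_{Z_i}}`. -/
def semiZ (i : Fin d) (α : ℝ) (u : Pt d → ℝ) : ℝ≥0∞ :=
  ⨆ (z : Pt d) (τ : ℝ) (_ : τ ≠ 0),
    ENNReal.ofReal (|u (flowZ (EuclideanSpace.single i 1) τ z) - u z| / |τ| ^ α)

/-- Hölder seminorm `‖u‖_{C^α_Y}`. -/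
def semiY (ϑ α : ℝ) (u : Pt d → ℝ) : ℝ≥0∞ :=
  ⨆ (z : Pt d) (τ : ℝ) (_ : τ ≠ 0),
    ENNReal.ofReal (|u (flowY τ z) - u z| / |τ| ^ (α / ϑ))

open Classical in
/-- The intrinsic Hölder seminorm `‖u‖_{C^α}`, defined recursively (with fuel). -/
def hNormAux (ϑ : ℝ) : ℕ → ℝ → (Pt d → ℝ) → ℝ≥0∞
  | 0, α, u => semiY ϑ α u + ∑ i, semiZ i α u
  | n + 1, α, u =>
    if α ≤ min 1 ϑ then semiY ϑ α u + ∑ i, semiZ i α u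
    else if α ≤ max 1 ϑ then
      if ϑ < 1 then hNormAux ϑ n (α - ϑ) (lieY u) + ∑ i, semiZ i α u
      else semiY ϑ α u + ∑ i, hNormAux ϑ n (α - 1) (dv i u)
    else hNormAux ϑ n (α - ϑ) (lieY u) + ∑ i, hNormAux ϑ n (α - 1) (dv i u)

open Classical in
/-- Membership in the intrinsic Hölder space `C^α`, defined recursively (with fuel). -/
def memAux (ϑ : ℝ) : ℕ → ℝ → (Pt d → ℝ) → Prop
  | 0, α, u => hNormAux ϑ 0 α u ≠ ⊤
  | n + 1, α, u =>
    if α ≤ min 1 ϑ then hNormAux ϑ (n + 1) α u ≠ ⊤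
    else if α ≤ max 1 ϑ then
      if ϑ < 1 then
        (∀ z : Pt d, HasLieAt flowY u z) ∧ memAux ϑ n (α - ϑ) (lieY u) ∧
          hNormAux ϑ (n + 1) α u ≠ ⊤
      else
        (∀ (i : Fin d) (z : Pt d), HasLieAt (flowZ (EuclideanSpace.single i 1)) u z) ∧
          (∀ i : Fin d, memAux ϑ n (α - 1) (dv i u)) ∧ hNormAux ϑ (n + 1) α u ≠ ⊤
    else
      (∀ z : Pt d, HasLieAt flowY u z) ∧ memAux ϑ n (α - ϑ) (lieY u) ∧
        (∀ (i : Fin d) (z : Pt d), HasLieAt (flowZ (EuclideanSpace.single i 1)) u z) ∧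
          (∀ i : Fin d, memAux ϑ n (α - 1) (dv i u)) ∧ hNormAux ϑ (n + 1) α u ≠ ⊤

/-- Enough fuel for the recursion defining `C^α`. -/
def fuel (ϑ α : ℝ) : ℕ := Nat.ceil (α / min 1 ϑ) + 1

/-- The intrinsic Hölder seminorm `‖u‖_{C^α}` (value in `ℝ≥0∞`). -/
def holderNorm (ϑ α : ℝ) (u : Pt d → ℝ) : ℝ≥0∞ := hNormAux ϑ (fuel ϑ α) α u

/-- `u ∈ C^α`. -/
def IsHolder (ϑ α : ℝ) (u : Pt d → ℝ) : Prop := memAux ϑ (fuel ϑ α) α u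

/-!
Write `X`, `Y`, `Z` for the flows of `∂_{x_i}`, the drift and `∂_{v_i}`. They satisfy the Heisenberg
relation `Z_c Y_a = X_{-ca} Y_a Z_c`, so for a function `f` that also has an `X`-derivative,
comparing the two mixed partials of `(a, c) ↦ f (Z_c Y_a p)` at the origin gives
`X f = Z Y f - Y Z f`. As `u` is not known to be differentiable along `X`, this is applied to
`∫₀^η u (X_r p) dr`, whose `X`-derivative is `u (X_η p) - u p`; the resulting identity is then
differentiated at `η = 0`.

Continuity of functions in `C^α` is obtained from their behaviour along `Y` and the `Z_i` only: a
displacement `ξ` in position is the group commutator of a drift by `τ = √|ξ|` and a change of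
velocity by `ξ / τ`, both of which are small. Finally, the recursive definition of `C^α` amounts to
independent conditions along `Y` (of weight `ϑ`) and along each `Z_i` (of weight `1`), which are
stable under subtraction.
-/

open Filter Topology

/-! ### Parametric integrals and mixed partial derivatives -/

section Calculus

variable {E : Type*} [NormedAddCommGroup E] [NormedSpace ℝ E]

theorem hasDerivAt_intervalIntegral_of_continuous {f f' : ℝ → ℝ → E}
    (hf : ∀ a, Continuous (f a)) (hf' : Continuous (Function.uncurry f'))
    (h : ∀ a r, HasDerivAt (fun a => f a r) (f' a r) a) (b c a₀ : ℝ) :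
    HasDerivAt (fun a => ∫ r in b..c, f a r) (∫ r in b..c, f' a₀ r) a₀ := by
  obtain ⟨C, hC⟩ := ((isCompact_closedBall a₀ 1).prod
    (isCompact_uIcc (a := b) (b := c))).exists_bound_of_continuousOn hf'.continuousOn
  exact (intervalIntegral.hasDerivAt_integral_of_dominated_loc_of_deriv_le (bound := fun _ => C)
    (Metric.closedBall_mem_nhds a₀ one_pos)
    (Eventually.of_forall fun a => (hf a).aestronglyMeasurable)
    ((hf a₀).intervalIntegrable _ _) (hf'.uncurry_left a₀).aestronglyMeasurable
    (Eventually.of_forall fun r hr a ha => hC (a, r) ⟨ha, Set.uIoc_subset_uIcc hr⟩)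
    intervalIntegrable_const (Eventually.of_forall fun r _ a _ => h a r)).2

theorem mixed_partials_eq [CompleteSpace E] {g gc gac : ℝ → ℝ → E} {ga : ℝ → E} {L : E}
    {a₀ c₀ : ℝ} (hgc : ∀ a c, HasDerivAt (g a) (gc a c) c) (hgc_cont : ∀ a, Continuous (gc a))
    (hgac : ∀ a c, HasDerivAt (fun a => gc a c) (gac a c) a)
    (hgac_cont : Continuous (Function.uncurry gac))
    (hga : ∀ c, HasDerivAt (fun a => g a c) (ga c) a₀) (hL : HasDerivAt ga L c₀) :
    gac a₀ c₀ = L := by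
  have increment_gc (a c : ℝ) : ∫ σ in c₀..c, gc a σ = g a c - g a c₀ :=
    intervalIntegral.integral_eq_sub_of_hasDerivAt (fun σ _ => hgc a σ)
      ((hgc_cont a).intervalIntegrable _ _)
  have increment_ga (c : ℝ) : ∫ σ in c₀..c, gac a₀ σ = ga c - ga c₀ := by
    have h := hasDerivAt_intervalIntegral_of_continuous hgc_cont hgac_cont hgac c₀ c a₀
    simp only [increment_gc] at h
    exact h.unique ((hga c).sub (hga c₀))
  have h := ((hgac_cont.uncurry_left a₀).integral_hasStrictDerivAt c₀ c₀).hasDerivAt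
  simp only [increment_ga] at h
  exact h.unique (hL.sub_const _)

end Calculus

/-! ### Lie derivatives along flows -/

section Flows

variable {M : Type*} [TopologicalSpace M] {E : Type*} [NormedAddCommGroup E] [NormedSpace ℝ E]

/-- `f'` is the Lie derivative of `f` along the flow `φ`, at every point. -/
def HasLieDeriv (φ : Flow ℝ M) (f f' : M → E) : Prop :=
  ∀ z, HasDerivAt (fun τ => f (φ τ z)) (f' z) 0

namespace HasLieDeriv

variable {φ ψ : Flow ℝ M} {f f' g g' : M → E}

theorem hasDerivAt (h : HasLieDeriv φ f f') (z : M) (s : ℝ) :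
    HasDerivAt (fun τ => f (φ τ z)) (f' (φ s z)) s := by
  have shifted := HasDerivAt.comp_sub_const s s (by simpa using h (φ s z))
  simpa only [← φ.map_add, sub_add_cancel] using shifted

theorem sub (hf : HasLieDeriv φ f f') (hg : HasLieDeriv φ g g') :
    HasLieDeriv φ (f - g) (f' - g') :=
  fun z => (hf z).sub (hg z)

theorem comp_flow (hcomm : ∀ a b z, φ a (ψ b z) = ψ b (φ a z)) (h : HasLieDeriv ψ f f') (a : ℝ) :
    HasLieDeriv ψ (fun z => f (φ a z)) (fun z => f' (φ a z)) :=
  fun z => by simpa only [hcomm] using h (φ a z)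

theorem integral_eq_sub [CompleteSpace E] (h : HasLieDeriv φ f f') (hf' : Continuous f')
    (τ : ℝ) (z : M) : ∫ r in (0 : ℝ)..τ, f' (φ r z) = f (φ τ z) - f z := by
  rw [intervalIntegral.integral_eq_sub_of_hasDerivAt (fun r _ => h.hasDerivAt z r)
    (Continuous.intervalIntegrable (by fun_prop) _ _), φ.map_zero_apply]

theorem hasDerivAt_comp_comp (hcomm : ∀ a b z, φ a (ψ b z) = ψ b (φ a z)) {fφ fψ : M → E}
    (hφ : HasLieDeriv φ f fφ) (hψ : HasLieDeriv ψ f fψ) (hfφ : Continuous fφ)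
    (hfψ : Continuous fψ) {α β : ℝ → ℝ} {α' β' s : ℝ} (hα : HasDerivAt α α' s)
    (hβ : HasDerivAt β β' s) (z : M) :
    HasDerivAt (fun s => f (φ (α s) (ψ (β s) z)))
      (α' • fφ (φ (α s) (ψ (β s) z)) + β' • fψ (φ (α s) (ψ (β s) z))) s := by
  have hasFDerivAt := (hasStrictFDerivAt_uncurry_coprod (𝕜 := ℝ) (u := (α s, β s))
    (f := fun a b => f (φ a (ψ b z)))
    (f₁ := fun a b => ContinuousLinearMap.toSpanSingletonCLE (fφ (φ a (ψ b z))))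
    (f₂ := fun a b => ContinuousLinearMap.toSpanSingletonCLE (fψ (φ a (ψ b z))))
    (Eventually.of_forall fun w => (hφ.hasDerivAt (ψ w.2 z) w.1).hasFDerivAt)
    (Eventually.of_forall fun w => by
      simpa only [hcomm] using! (hψ.hasDerivAt (φ w.1 z) w.2).hasFDerivAt)
    (Continuous.continuousAt <| by simp only [Function.HasUncurry.uncurry, id]; fun_prop)
    (Continuous.continuousAt <| by
      simp only [Function.HasUncurry.uncurry, id]; fun_prop)).hasFDerivAt
  simpa [Function.HasUncurry.uncurry] using! hasFDerivAt.comp_hasDerivAt s (hα.prodMk hβ)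

end HasLieDeriv

/-- The integral of `f` along the orbit segment `r ↦ φ r z`, `0 ≤ r ≤ η`. As a function of `z` it
is a mollification of `f`: it is differentiable along `φ` as soon as `f` is continuous. -/
def flowIntegral (φ : Flow ℝ M) (η : ℝ) (f : M → E) (z : M) : E := ∫ r in (0 : ℝ)..η, f (φ r z)

variable {φ ψ : Flow ℝ M} {f f' : M → E}

theorem continuous_flowIntegral (η : ℝ) (hf : Continuous f) :
    Continuous (flowIntegral φ η f) :=
  intervalIntegral.continuous_parametric_intervalIntegral_of_continuous'
    (f := fun z r => f (φ r z)) (by fun_prop) 0 η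

theorem HasLieDeriv.flowIntegral (hcomm : ∀ a b z, φ a (ψ b z) = ψ b (φ a z))
    (h : HasLieDeriv ψ f f') (hf : Continuous f) (hf' : Continuous f') (η : ℝ) :
    HasLieDeriv ψ (flowIntegral φ η f) (flowIntegral φ η f') := by
  intro z
  have hderiv (a r : ℝ) :
      HasDerivAt (fun a => f (φ r (ψ a z))) (f' (φ r (ψ a z))) a := by
    simpa only [hcomm] using h.hasDerivAt (φ r z) a
  simpa only [ψ.map_zero_apply] using! hasDerivAt_intervalIntegral_of_continuous
    (fun a => by fun_prop) (by fun_prop) hderiv 0 η 0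

theorem hasDerivAt_flowIntegral_length [CompleteSpace E] (hf : Continuous f) (z : M) (η : ℝ) :
    HasDerivAt (fun η => flowIntegral φ η f z) (f (φ η z)) η :=
  (Continuous.integral_hasStrictDerivAt (by fun_prop) 0 η).hasDerivAt

theorem hasLieDeriv_flowIntegral_self [CompleteSpace E] (hf : Continuous f) (η : ℝ) :
    HasLieDeriv φ (flowIntegral φ η f) (fun z => f (φ η z) - f z) := by
  intro z
  have hint (a b : ℝ) : IntervalIntegrable (fun r => f (φ r z)) MeasureTheory.volume a b :=
    Continuous.intervalIntegrable (by fun_prop) _ _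
  have flowIntegral_translate (δ : ℝ) :
      flowIntegral φ η f (φ δ z) = flowIntegral φ (η + δ) f z - flowIntegral φ δ f z := by
    have h := intervalIntegral.integral_comp_add_right (a := 0) (b := η) (fun r => f (φ r z)) δ
    simpa only [flowIntegral, intervalIntegral.integral_interval_sub_left (hint _ _) (hint _ _),
      φ.map_add, zero_add] using h
  have h := ((hasDerivAt_flowIntegral_length (φ := φ) hf z (η + 0)).comp_const_add η 0).sub
    (hasDerivAt_flowIntegral_length (φ := φ) hf z 0)
  simpa only [flowIntegral_translate, add_zero, φ.map_zero_apply] using! h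

/-! ### The commutator of two flows generating a Heisenberg group -/

/-- The flows `X`, `Y`, `Z` satisfy the relations of the one-parameter subgroups of the Heisenberg
group in which `X` is central and `[Z, Y] = X`. -/
structure IsHeisenberg (X Y Z : Flow ℝ M) : Prop where
  commute_left : ∀ a b z, X a (Y b z) = Y b (X a z)
  commute_right : ∀ a c z, X a (Z c z) = Z c (X a z)
  shear : ∀ a c z, Z c (Y a z) = X (-c * a) (Y a (Z c z))

namespace IsHeisenberg

variable {X Y Z : Flow ℝ M}

theorem hasDerivAt_shear (hH : IsHeisenberg X Y Z) {fx fy : M → E} (hx : HasLieDeriv X f fx)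
    (hy : HasLieDeriv Y f fy) (hfx : Continuous fx) (hfy : Continuous fy) (c a : ℝ) (z : M) :
    HasDerivAt (fun a => f (Z c (Y a z))) (fy (Z c (Y a z)) - c • fx (Z c (Y a z))) a := by
  have h := hx.hasDerivAt_comp_comp hH.commute_left hy hfx hfy
    ((hasDerivAt_id a).const_mul (-c)) (hasDerivAt_id a) (Z c z)
  simp only [id, ← hH.shear] at h
  exact h.congr_deriv (by module)

variable [CompleteSpace E]

theorem lieDeriv_eq_commutator (hH : IsHeisenberg X Y Z) {fx fy fz fyz fxz fzx fzy : M → E}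
    (hx : HasLieDeriv X f fx) (hy : HasLieDeriv Y f fy) (hz : HasLieDeriv Z f fz)
    (hyz : HasLieDeriv Y fz fyz) (hxz : HasLieDeriv X fz fxz)
    (hzx : HasLieDeriv Z fx fzx) (hzy : HasLieDeriv Z fy fzy)
    (hfx : Continuous fx) (hfy : Continuous fy) (hfz : Continuous fz)
    (hfyz : Continuous fyz) (hfxz : Continuous fxz) :
    fx = fzy - fyz := by
  funext p
  -- The shear makes `∂_a` of `(a, c) ↦ f (Z c (Y a p))` equal to `Y f - c • X f`; the explicit
  -- factor `c` is what survives the comparison of mixed partials at the origin.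
  have hL : HasDerivAt (fun c => fy (Z c p) - c • fx (Z c p)) (fzy p - fx p) 0 := by
    refine ((hzy p).fun_sub ((hasDerivAt_id' (0 : ℝ)).fun_smul (hzx p))).congr_deriv ?_
    simp [Z.map_zero_apply]
  have h := mixed_partials_eq (g := fun a c => f (Z c (Y a p)))
    (gac := fun a c => fyz (Z c (Y a p)) - c • fxz (Z c (Y a p)))
    (fun a c => hz.hasDerivAt (Y a p) c) (fun a => by fun_prop)
    (fun a c => hH.hasDerivAt_shear hxz hyz hfxz hfyz c a p) (by fun_prop)
    (fun c => by simpa only [Y.map_zero_apply] using! hH.hasDerivAt_shear hx hy hfx hfy c 0 p) hL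
  simp only [Y.map_zero_apply, Z.map_zero_apply, zero_smul, sub_zero] at h
  simp [h]

theorem increment_eq_flowIntegral_commutator (hH : IsHeisenberg X Y Z) {fy fz fyz fzy : M → E}
    (hy : HasLieDeriv Y f fy) (hz : HasLieDeriv Z f fz) (hyz : HasLieDeriv Y fz fyz)
    (hzy : HasLieDeriv Z fy fzy) (hf : Continuous f) (hfy : Continuous fy) (hfz : Continuous fz)
    (hfyz : Continuous fyz) (hfzy : Continuous fzy) (η : ℝ) (z : M) :
    f (X η z) - f z = flowIntegral X η fzy z - flowIntegral X η fyz z :=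
  congr_fun (hH.lieDeriv_eq_commutator
    (hasLieDeriv_flowIntegral_self hf η)
    (hy.flowIntegral hH.commute_left hf hfy η)
    (hz.flowIntegral hH.commute_right hf hfz η)
    (hyz.flowIntegral hH.commute_left hfz hfyz η)
    (hasLieDeriv_flowIntegral_self hfz η)
    ((hz.comp_flow hH.commute_right η).sub hz)
    (hzy.flowIntegral hH.commute_right hfy hfzy η)
    (by fun_prop) (continuous_flowIntegral η hfy) (continuous_flowIntegral η hfz)
    (continuous_flowIntegral η hfyz) (by fun_prop)) z

theorem hasLieDeriv_commutator (hH : IsHeisenberg X Y Z) {fy fz fyz fzy : M → E}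
    (hy : HasLieDeriv Y f fy) (hz : HasLieDeriv Z f fz) (hyz : HasLieDeriv Y fz fyz)
    (hzy : HasLieDeriv Z fy fzy) (hf : Continuous f) (hfy : Continuous fy) (hfz : Continuous fz)
    (hfyz : Continuous fyz) (hfzy : Continuous fzy) :
    HasLieDeriv X f (fzy - fyz) := by
  intro z
  have taylor (η : ℝ) : f (X η z) = flowIntegral X η fzy z - flowIntegral X η fyz z + f z :=
    sub_eq_iff_eq_add.1 (hH.increment_eq_flowIntegral_commutator hy hz hyz hzy hf hfy hfz hfyz
      hfzy η z)
  have h := ((hasDerivAt_flowIntegral_length (φ := X) hfzy z 0).fun_sub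
    (hasDerivAt_flowIntegral_length (φ := X) hfyz z 0)).add_const (f z)
  simpa only [taylor, X.map_zero_apply] using! h

end IsHeisenberg

end Flows

/-! ### Hölder continuity and continuity along a flow -/

section AlongFlow

variable {M : Type*} [TopologicalSpace M] {E : Type*} [NormedAddCommGroup E]

/-- `f` is `γ`-Hölder along the orbits of `φ`, uniformly over all orbits. -/
def HolderAlong (φ : Flow ℝ M) (γ : ℝ) (f : M → E) : Prop :=
  ∃ C, ∀ z τ, ‖f (φ τ z) - f z‖ ≤ C * |τ| ^ γ

/-- `f` varies little along short orbit segments of `φ`, locally uniformly in the base point. -/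
def ContinuousAlong (φ : Flow ℝ M) (f : M → E) : Prop :=
  ∀ z₀, Tendsto (fun q : ℝ × M => f (φ q.1 q.2) - f q.2) (𝓝 (0, z₀)) (𝓝 0)

/-- The filter of points `z` close to `z₀` whose value `f z` is close to `f z₀`: a base of it is
given by the projections to `M` of the neighbourhoods of `(z₀, f z₀)` in the graph of `f`. -/
def graphNhds (f : M → E) (z₀ : M) : Filter M := 𝓝 z₀ ⊓ comap f (𝓝 (f z₀))

theorem HolderAlong.sub {φ : Flow ℝ M} {γ : ℝ} {f g : M → E} (hf : HolderAlong φ γ f)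
    (hg : HolderAlong φ γ g) : HolderAlong φ γ (f - g) := by
  obtain ⟨Cf, hCf⟩ := hf
  obtain ⟨Cg, hCg⟩ := hg
  refine ⟨Cf + Cg, fun z τ => ?_⟩
  calc ‖(f - g) (φ τ z) - (f - g) z‖ = ‖(f (φ τ z) - f z) - (g (φ τ z) - g z)‖ := by
        rw [Pi.sub_apply, Pi.sub_apply, sub_sub_sub_comm]
    _ ≤ ‖f (φ τ z) - f z‖ + ‖g (φ τ z) - g z‖ := norm_sub_le _ _
    _ ≤ (Cf + Cg) * |τ| ^ γ := by rw [add_mul]; exact add_le_add (hCf z τ) (hCg z τ)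

theorem HolderAlong.continuousAlong {φ : Flow ℝ M} {γ : ℝ} {f : M → E} (h : HolderAlong φ γ f)
    (hγ : 0 < γ) : ContinuousAlong φ f := by
  obtain ⟨C, hC⟩ := h
  intro z₀
  have hbound : Continuous fun q : ℝ × M => C * |q.1| ^ γ :=
    continuous_const.mul (continuous_fst.abs.rpow_const fun _ => Or.inr hγ.le)
  refine squeeze_zero_norm (fun q => hC q.2 q.1) ?_
  simpa [Real.zero_rpow hγ.ne'] using hbound.tendsto (0, z₀)

theorem HasLieDeriv.continuousAlong [NormedSpace ℝ E] [CompleteSpace E] {φ : Flow ℝ M}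
    {f f' : M → E} (h : HasLieDeriv φ f f') (hf' : Continuous f') : ContinuousAlong φ f := by
  intro z₀
  have hint : Continuous fun q : ℝ × M => ∫ r in (0 : ℝ)..q.1, f' (φ r q.2) :=
    intervalIntegral.continuous_parametric_intervalIntegral_of_continuous
      (f := fun (q : ℝ × M) r => f' (φ r q.2)) (by fun_prop) continuous_fst
  simpa only [h.integral_eq_sub hf'] using hint.tendsto' (0, z₀) 0 intervalIntegral.integral_same

theorem ContinuousAlong.tendsto_graphNhds {φ : Flow ℝ M} {f : M → E} (h : ContinuousAlong φ f)
    {ι : Type*} {l : Filter ι} {τ : ι → ℝ} {p : ι → M} {z₀ : M} (hτ : Tendsto τ l (𝓝 0))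
    (hp : Tendsto p l (graphNhds f z₀)) :
    Tendsto (fun n => φ (τ n) (p n)) l (graphNhds f z₀) := by
  simp only [graphNhds, tendsto_inf, tendsto_comap_iff] at hp ⊢
  obtain ⟨hp, hfp⟩ := hp
  have hτp := hτ.prodMk_nhds hp
  constructor
  · simpa [Function.comp_def] using
      ((φ.continuous continuous_fst continuous_snd).tendsto (0, z₀)).comp hτp
  · simpa [Function.comp_def] using ((h z₀).comp hτp).add hfp

end AlongFlow

/-! ### The Galilean flows -/

section Galilean

/-- `flowY`, bundled as a flow. -/
def driftFlow : Flow ℝ (Pt d) where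
  toFun := flowY
  cont' := by unfold flowY; fun_prop
  map_add' a b z := by ext <;> simp [flowY] <;> ring
  map_zero' z := by simp [flowY]

/-- `flowZ h`, bundled as a flow. -/
def velocityFlow (h : EuclideanSpace ℝ (Fin d)) : Flow ℝ (Pt d) where
  toFun := flowZ h
  cont' := by unfold flowZ; fun_prop
  map_add' a b z := by ext <;> simp [flowZ]; ring
  map_zero' z := by simp [flowZ]

/-- `flowX h`, bundled as a flow. -/
def positionFlow (h : EuclideanSpace ℝ (Fin d)) : Flow ℝ (Pt d) where
  toFun := flowX h
  cont' := by unfold flowX; fun_prop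
  map_add' a b z := by ext <;> simp [flowX]; ring
  map_zero' z := by simp [flowX]

theorem isHeisenberg_galilean (h : EuclideanSpace ℝ (Fin d)) :
    IsHeisenberg (positionFlow h) driftFlow (velocityFlow h) where
  commute_left a b z := by
    change flowX h a (flowY b z) = flowY b (flowX h a z)
    ext <;> simp [flowX, flowY]; ring
  commute_right _ _ _ := rfl
  shear a c z := by
    change flowZ h c (flowY a z) = flowX h (-c * a) (flowY a (flowZ h c z))
    ext <;> simp [flowX, flowY, flowZ]; ring

theorem flowX_eq_group_commutator (τ : ℝ) (h : EuclideanSpace ℝ (Fin d)) (z : Pt d) :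
    flowZ h 1 (flowY (-τ) (flowZ (-h) 1 (flowY τ z))) = flowX (τ • h) 1 z := by
  ext <;> simp [flowX, flowY, flowZ]

theorem flowX_flowZ_flowY_eq (z₀ z : Pt d) :
    flowX (z.2.1 - z₀.2.1 - (z.1 - z₀.1) • z₀.2.2) 1
      (flowZ (z.2.2 - z₀.2.2) 1 (flowY (z.1 - z₀.1) z₀)) = z := by
  ext <;> simp [flowX, flowY, flowZ]

theorem exists_tendsto_zero_smul_eq {V : Type*} [NormedAddCommGroup V] [NormedSpace ℝ V]
    {ι : Type*} {l : Filter ι} {ξ : ι → V} (hξ : Tendsto ξ l (𝓝 0)) :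
    ∃ (τ : ι → ℝ) (h : ι → V), Tendsto τ l (𝓝 0) ∧ Tendsto h l (𝓝 0) ∧
      ∀ n, τ n • h n = ξ n := by
  have hτ : Tendsto (fun n => √‖ξ n‖) l (𝓝 0) := by simpa using hξ.norm.sqrt
  refine ⟨fun n => √‖ξ n‖, fun n => (√‖ξ n‖)⁻¹ • ξ n, hτ, ?_, fun n => ?_⟩
  · rw [tendsto_zero_iff_norm_tendsto_zero]
    refine hτ.congr fun n => ?_
    rw [norm_smul, norm_inv, Real.norm_of_nonneg (Real.sqrt_nonneg _), inv_mul_eq_div,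
      Real.div_sqrt]
  · rcases eq_or_ne (ξ n) 0 with h0 | h0
    · simp [h0]
    · exact smul_inv_smul₀ (Real.sqrt_ne_zero'.2 (norm_pos_iff.2 h0)) _

variable {E : Type*} [NormedAddCommGroup E] {f : Pt d → E} {ι : Type*} {l : Filter ι}
  {p : ι → Pt d} {z₀ : Pt d}

theorem tendsto_flowZ_graphNhds
    (hZ : ∀ i, ContinuousAlong (velocityFlow (EuclideanSpace.single i 1)) f)
    {w : ι → EuclideanSpace ℝ (Fin d)} (hw : Tendsto w l (𝓝 0))
    (hp : Tendsto p l (graphNhds f z₀)) :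
    Tendsto (fun n => flowZ (w n) 1 (p n)) l (graphNhds f z₀) := by
  have partial_sum (s : Finset (Fin d)) : Tendsto
      (fun n => flowZ (∑ i ∈ s, w n i • EuclideanSpace.single i (1 : ℝ)) 1 (p n)) l
      (graphNhds f z₀) := by
    induction s using Finset.induction_on with
    | empty => simpa [flowZ] using hp
    | insert j s hj ih =>
      have hwj : Tendsto (fun n => w n j) l (𝓝 0) :=
        ((EuclideanSpace.proj j).continuous.tendsto' 0 0 rfl).comp hw
      refine ((hZ j).tendsto_graphNhds hwj ih).congr fun n => ?_
      change flowZ _ _ (flowZ _ _ _) = _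
      simp only [flowZ, Finset.sum_insert hj, one_smul]
      rw [add_comm (w n j • _), ← add_assoc]
  have sum_coordinates (v : EuclideanSpace ℝ (Fin d)) :
      ∑ i, v i • EuclideanSpace.single i (1 : ℝ) = v := by
    simpa using (EuclideanSpace.basisFun (Fin d) ℝ).sum_repr v
  simpa only [sum_coordinates] using partial_sum Finset.univ

theorem tendsto_flowX_graphNhds (hY : ContinuousAlong driftFlow f)
    (hZ : ∀ i, ContinuousAlong (velocityFlow (EuclideanSpace.single i 1)) f)
    {ξ : ι → EuclideanSpace ℝ (Fin d)} (hξ : Tendsto ξ l (𝓝 0))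
    (hp : Tendsto p l (graphNhds f z₀)) :
    Tendsto (fun n => flowX (ξ n) 1 (p n)) l (graphNhds f z₀) := by
  obtain ⟨τ, h, hτ, hh, hτh⟩ := exists_tendsto_zero_smul_eq hξ
  have drift_forth := hY.tendsto_graphNhds hτ hp
  have kick_forth := tendsto_flowZ_graphNhds hZ (by simpa using hh.neg) drift_forth
  have drift_back := hY.tendsto_graphNhds (by simpa using hτ.neg) kick_forth
  have kick_back := tendsto_flowZ_graphNhds hZ hh drift_back
  refine kick_back.congr fun n => ?_
  rw [← hτh n, ← flowX_eq_group_commutator]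
  rfl

theorem continuous_of_continuousAlong (hY : ContinuousAlong driftFlow f)
    (hZ : ∀ i, ContinuousAlong (velocityFlow (EuclideanSpace.single i 1)) f) : Continuous f := by
  rw [continuous_iff_continuousAt]
  intro z₀
  have ht : Tendsto (fun z : Pt d => z.1 - z₀.1) (𝓝 z₀) (𝓝 0) :=
    Continuous.tendsto' (by fun_prop) _ _ (by simp)
  have hv : Tendsto (fun z : Pt d => z.2.2 - z₀.2.2) (𝓝 z₀) (𝓝 0) :=
    Continuous.tendsto' (by fun_prop) _ _ (by simp)
  have hx : Tendsto (fun z : Pt d => z.2.1 - z₀.2.1 - (z.1 - z₀.1) • z₀.2.2) (𝓝 z₀) (𝓝 0) :=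
    Continuous.tendsto' (by fun_prop) _ _ (by simp)
  have start : Tendsto (fun _ => z₀) (𝓝 z₀) (graphNhds f z₀) :=
    tendsto_inf.2 ⟨tendsto_const_nhds, tendsto_comap_iff.2 tendsto_const_nhds⟩
  have reach := (tendsto_flowX_graphNhds hY hZ hx
    (tendsto_flowZ_graphNhds hZ hv (hY.tendsto_graphNhds ht start))).congr
    fun z => flowX_flowZ_flowY_eq z₀ z
  exact tendsto_comap_iff.1 (tendsto_inf.1 reach).2

end Galilean

/-! ### Intrinsic Hölder spaces -/

section RegularAlong

variable {M : Type*} [TopologicalSpace M] {E : Type*} [NormedAddCommGroup E]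

/-- The `γ`-Hölder seminorm of `f` along the orbits of `φ`, with values in `[0, ∞]`; `semiY` and
`semiZ` are instances. -/
def holderSeminormAlong (φ : Flow ℝ M) (γ : ℝ) (f : M → E) : ℝ≥0∞ :=
  ⨆ (z : M) (τ : ℝ) (_ : τ ≠ 0), ENNReal.ofReal (‖f (φ τ z) - f z‖ / |τ| ^ γ)

theorem holderSeminormAlong_ne_top_iff {φ : Flow ℝ M} {γ : ℝ} {f : M → E} :
    holderSeminormAlong φ γ f ≠ ⊤ ↔ HolderAlong φ γ f := by
  have quotient_le_iff {τ : ℝ} (hτ : τ ≠ 0) (z : M) (C : ℝ) :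
      ‖f (φ τ z) - f z‖ / |τ| ^ γ ≤ C ↔ ‖f (φ τ z) - f z‖ ≤ C * |τ| ^ γ :=
    div_le_iff₀ (Real.rpow_pos_of_pos (abs_pos.2 hτ) _)
  constructor
  · intro h
    refine ⟨(holderSeminormAlong φ γ f).toReal, fun z τ => ?_⟩
    rcases eq_or_ne τ 0 with rfl | hτ
    · rw [φ.map_zero_apply, sub_self, norm_zero]
      positivity
    · refine (quotient_le_iff hτ z _).1 ((ENNReal.ofReal_le_iff_le_toReal h).1 ?_)
      exact le_iSup₂_of_le z τ (le_iSup_of_le hτ le_rfl)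
  · rintro ⟨C, hC⟩
    refine ne_top_of_le_ne_top (ENNReal.ofReal_ne_top (r := C)) ?_
    exact iSup₂_le fun z τ => iSup_le fun hτ =>
      ENNReal.ofReal_le_ofReal ((quotient_le_iff hτ z C).2 (hC z τ))

variable [NormedSpace ℝ E]

/-- The Lie derivative of `f` along the flow `φ` (junk value where it does not exist); `lieY` and
`dv i` are instances. -/
def lieDeriv (φ : Flow ℝ M) (f : M → E) (z : M) : E := deriv (fun τ => f (φ τ z)) 0

theorem HasLieDeriv.lieDeriv_eq {φ : Flow ℝ M} {f f' : M → E} (h : HasLieDeriv φ f f') :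
    lieDeriv φ f = f' :=
  funext fun z => (h z).deriv

/-- The condition that membership in a Hölder space of order `α` imposes along the flow `φ` of a
vector field of weight `w`; `S β` stands for the space of order `β`, to which the Lie derivative is
required to belong when `α` exceeds `w`. -/
def RegularAlong (φ : Flow ℝ M) (w : ℝ) (S : ℝ → (M → E) → Prop) (α : ℝ) (u : M → E) : Prop :=
  if α ≤ w then HolderAlong φ (α / w) u
  else HasLieDeriv φ u (lieDeriv φ u) ∧ S (α - w) (lieDeriv φ u)

namespace RegularAlong

variable {φ : Flow ℝ M} {w α : ℝ} {S T : ℝ → (M → E) → Prop} {f g : M → E}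

theorem congr_space (h : S (α - w) (lieDeriv φ f) ↔ T (α - w) (lieDeriv φ f)) :
    RegularAlong φ w S α f ↔ RegularAlong φ w T α f := by
  simp only [RegularAlong, h]

theorem sub (hS : w < α → ∀ f g, S (α - w) f → S (α - w) g → S (α - w) (f - g))
    (hf : RegularAlong φ w S α f) (hg : RegularAlong φ w S α g) :
    RegularAlong φ w S α (f - g) := by
  rw [RegularAlong] at hf hg ⊢
  split_ifs at hf hg ⊢ with hα
  · exact hf.sub hg
  · have h := hf.1.sub hg.1
    rw [h.lieDeriv_eq]
    exact ⟨h, hS (not_le.1 hα) _ _ hf.2 hg.2⟩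

theorem continuousAlong [CompleteSpace E] (hw : 0 < w) (hα : 0 < α)
    (hS : w < α → ∀ f, S (α - w) f → Continuous f) (hf : RegularAlong φ w S α f) :
    ContinuousAlong φ f := by
  rw [RegularAlong] at hf
  split_ifs at hf with hαw
  · exact hf.continuousAlong (div_pos hα hw)
  · exact hf.1.continuousAlong (hS (not_le.1 hαw) _ hf.2)

end RegularAlong

end RegularAlong

theorem descent_induction {G : Type*} [AddCommGroup G] [LinearOrder G] [IsOrderedAddMonoid G]
    [Archimedean G] {m : G} (hm : 0 < m) {P : G → Prop}
    (h : ∀ a, (∀ b, 0 < b → b ≤ a - m → P b) → P a) (a : G) : P a := by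
  have bounded (n : ℕ) : ∀ a ≤ n • m, P a := by
    induction n with
    | zero =>
      intro a ha
      rw [zero_nsmul] at ha
      exact h a fun b hb hba => absurd (hba.trans (sub_le_self a hm.le)) (ha.trans_lt hb).not_ge
    | succ n ih =>
      exact fun a ha => h a fun b _ hba =>
        ih b (hba.trans (sub_le_iff_le_add.2 (succ_nsmul m n ▸ ha)))
  obtain ⟨n, hn⟩ := Archimedean.arch a hm
  exact bounded n a hn

section IntrinsicHolder

variable {ϑ α : ℝ} {n : ℕ} {u : Pt d → ℝ}

theorem memAux.hNormAux_ne_top (h : memAux ϑ n α u) : hNormAux ϑ n α u ≠ ⊤ := by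
  cases n with
  | zero => exact h
  | succ n =>
    rw [memAux] at h
    split_ifs at h
    exacts [h, h.2.2, h.2.2, h.2.2.2.2]

theorem semiY_eq_holderSeminormAlong :
    semiY ϑ α u = holderSeminormAlong driftFlow (α / ϑ) u :=
  rfl

theorem semiZ_eq_holderSeminormAlong (i : Fin d) :
    semiZ i α u = holderSeminormAlong (velocityFlow (EuclideanSpace.single i 1)) α u :=
  rfl

theorem lieY_eq_lieDeriv : lieY u = lieDeriv driftFlow u :=
  rfl

theorem dv_eq_lieDeriv (i : Fin d) :
    dv i u = lieDeriv (velocityFlow (EuclideanSpace.single i 1)) u :=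
  rfl

theorem hasLieDeriv_lieY_iff : HasLieDeriv driftFlow u (lieY u) ↔ ∀ z, HasLieAt flowY u z :=
  forall_congr' fun _ => hasDerivAt_deriv_iff

theorem hasLieDeriv_dv_iff {i : Fin d} :
    HasLieDeriv (velocityFlow (EuclideanSpace.single i 1)) u (dv i u) ↔
      ∀ z, HasLieAt (flowZ (EuclideanSpace.single i 1)) u z :=
  forall_congr' fun _ => hasDerivAt_deriv_iff

theorem memAux_zero_iff : memAux ϑ 0 α u ↔ HolderAlong driftFlow (α / ϑ) u ∧
    ∀ i, HolderAlong (velocityFlow (EuclideanSpace.single i 1)) α u := by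
  simp only [memAux, hNormAux, ENNReal.add_ne_top, ENNReal.sum_ne_top, Finset.mem_univ,
    forall_const, semiY_eq_holderSeminormAlong, semiZ_eq_holderSeminormAlong,
    holderSeminormAlong_ne_top_iff]

theorem memAux_succ_iff : memAux ϑ (n + 1) α u ↔ RegularAlong driftFlow ϑ (memAux ϑ n) α u ∧
    ∀ i, RegularAlong (velocityFlow (EuclideanSpace.single i 1)) 1 (memAux ϑ n) α u := by
  simp only [RegularAlong, ← lieY_eq_lieDeriv, ← dv_eq_lieDeriv, hasLieDeriv_lieY_iff,
    hasLieDeriv_dv_iff, div_one, ← holderSeminormAlong_ne_top_iff, ← semiY_eq_holderSeminormAlong,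
    ← semiZ_eq_holderSeminormAlong, memAux]
  have hY := memAux.hNormAux_ne_top (ϑ := ϑ) (n := n) (α := α - ϑ) (u := lieY u)
  have hZ (i : Fin d) := memAux.hNormAux_ne_top (ϑ := ϑ) (n := n) (α := α - 1) (u := dv i u)
  rcases le_or_gt α 1 with h1 | h1 <;> rcases le_or_gt α ϑ with hϑ | hϑ
  · simp only [hNormAux, ENNReal.add_ne_top, ENNReal.sum_ne_top, Finset.mem_univ, forall_const,
      h1, hϑ, le_min_iff, and_self, if_true]
  · simp only [hNormAux, ENNReal.add_ne_top, ENNReal.sum_ne_top, Finset.mem_univ, forall_const,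
      h1, hϑ.not_ge, hϑ.trans_le h1, le_min_iff, le_max_iff, and_false, true_or, if_true, if_false]
    tauto
  · simp only [hNormAux, ENNReal.add_ne_top, ENNReal.sum_ne_top, Finset.mem_univ, forall_const,
      h1.not_ge, hϑ, (h1.trans_le hϑ).not_gt, le_min_iff, le_max_iff, false_and, or_true, if_true,
      if_false, forall_and]
    tauto
  · simp only [hNormAux, ENNReal.add_ne_top, ENNReal.sum_ne_top, Finset.mem_univ, forall_const,
      h1.not_ge, hϑ.not_ge, le_min_iff, le_max_iff, false_and, or_false, if_false, forall_and]
    tauto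

theorem memAux_succ_iff_memAux (hα : α ≤ (n + 1) * min 1 ϑ) :
    memAux ϑ (n + 1) α u ↔ memAux ϑ n α u := by
  have h1 := min_le_left 1 ϑ
  have hϑ := min_le_right 1 ϑ
  induction n generalizing α u with
  | zero =>
    rw [Nat.cast_zero, zero_add, one_mul] at hα
    simp only [memAux_succ_iff, memAux_zero_iff, RegularAlong, hα.trans h1, hα.trans hϑ, if_true,
      div_one]
  | succ n ih =>
    push_cast at hα
    rw [memAux_succ_iff, memAux_succ_iff (n := n)]
    exact and_congr (RegularAlong.congr_space (ih (by linarith)))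
      (forall_congr' fun i => RegularAlong.congr_space (ih (by linarith)))

theorem memAux_iff_isHolder (hϑ : 0 < ϑ) (hα : α ≤ (n + 1) * min 1 ϑ) :
    memAux ϑ n α u ↔ IsHolder ϑ α u := by
  have hm : 0 < min 1 ϑ := lt_min one_pos hϑ
  have raise_fuel {k l : ℕ} (hk : α ≤ (k + 1) * min 1 ϑ) (hkl : k ≤ l) :
      memAux ϑ l α u ↔ memAux ϑ k α u := by
    induction l, hkl using Nat.le_induction with
    | base => rfl
    | succ l hkl ih => exact (memAux_succ_iff_memAux (hk.trans (by gcongr))).trans ih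
  have hfuel : α ≤ (fuel ϑ α + 1) * min 1 ϑ := by
    rw [← div_le_iff₀ hm, fuel]
    push_cast
    linarith [Nat.le_ceil (α / min 1 ϑ)]
  rcases le_total n (fuel ϑ α) with h | h
  · exact (raise_fuel hα h).symm
  · exact raise_fuel hfuel h

-- Membership splits into one condition per vector field, each of which sees only the weight of
-- that field: the case distinction between `ϑ < 1`, `ϑ = 1` and `ϑ > 1` disappears.
theorem isHolder_iff (hϑ : 0 < ϑ) :
    IsHolder ϑ α u ↔ RegularAlong driftFlow ϑ (IsHolder ϑ) α u ∧
      ∀ i, RegularAlong (velocityFlow (EuclideanSpace.single i 1)) 1 (IsHolder ϑ) α u := by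
  have h1 := min_le_left 1 ϑ
  have hmϑ := min_le_right 1 ϑ
  have hm : 0 < min 1 ϑ := lt_min one_pos hϑ
  have hceil : α ≤ ⌈α / min 1 ϑ⌉₊ * min 1 ϑ := (div_le_iff₀ hm).1 (Nat.le_ceil _)
  have hspace {w : ℝ} (hw : min 1 ϑ ≤ w) (g : Pt d → ℝ) :
      memAux ϑ ⌈α / min 1 ϑ⌉₊ (α - w) g ↔ IsHolder ϑ (α - w) g :=
    memAux_iff_isHolder hϑ (by linarith)
  rw [IsHolder, fuel, memAux_succ_iff]
  exact and_congr (RegularAlong.congr_space (hspace hmϑ _))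
    (forall_congr' fun i => RegularAlong.congr_space (hspace h1 _))

namespace IsHolder

theorem hasLieDeriv_and_isHolder_lieY (hϑ : 0 < ϑ) (hα : ϑ < α) (hu : IsHolder ϑ α u) :
    HasLieDeriv driftFlow u (lieY u) ∧ IsHolder ϑ (α - ϑ) (lieY u) := by
  have h := ((isHolder_iff hϑ).1 hu).1
  rwa [RegularAlong, if_neg hα.not_ge] at h

theorem hasLieDeriv_and_isHolder_dv (hϑ : 0 < ϑ) (hα : 1 < α) (hu : IsHolder ϑ α u) (i : Fin d) :
    HasLieDeriv (velocityFlow (EuclideanSpace.single i 1)) u (dv i u) ∧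
      IsHolder ϑ (α - 1) (dv i u) := by
  have h := ((isHolder_iff hϑ).1 hu).2 i
  rwa [RegularAlong, if_neg hα.not_ge] at h

theorem sub (hϑ : 0 < ϑ) {v : Pt d → ℝ} (hu : IsHolder ϑ α u) (hv : IsHolder ϑ α v) :
    IsHolder ϑ α (u - v) := by
  induction α using descent_induction (lt_min one_pos hϑ) generalizing u v with
  | h α ih =>
    rw [isHolder_iff hϑ] at hu hv ⊢
    exact ⟨hu.1.sub (fun hα f g => ih _ (sub_pos.2 hα) (by gcongr; exact min_le_right 1 ϑ)) hv.1,
      fun i => (hu.2 i).sub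
        (fun hα f g => ih _ (sub_pos.2 hα) (by gcongr; exact min_le_left 1 ϑ)) (hv.2 i)⟩

theorem continuous (hϑ : 0 < ϑ) (hα : 0 < α) (hu : IsHolder ϑ α u) : Continuous u := by
  induction α using descent_induction (lt_min one_pos hϑ) generalizing u with
  | h α ih =>
    rw [isHolder_iff hϑ] at hu
    exact continuous_of_continuousAlong
      (hu.1.continuousAlong hϑ hα fun h f =>
        ih _ (sub_pos.2 h) (by gcongr; exact min_le_right 1 ϑ) (sub_pos.2 h))
      fun i => (hu.2 i).continuousAlong one_pos hα fun h f =>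
        ih _ (sub_pos.2 h) (by gcongr; exact min_le_left 1 ϑ) (sub_pos.2 h)

end IsHolder

end IntrinsicHolder

/-- Existence of the position derivative as a commutator: if `α > 1 + ϑ` and `u ∈ C^α`, then
for every `i` the difference quotients `(u(t, x+δeᵢ, v) − u(t,x,v))/δ` converge, as `δ → 0`,
to `[Z_i, Y]u(z) = Z_i(Yu)(z) − Y(Z_i u)(z)`; hence `∂_{x_i} u` exists everywhere and equals
`[Z_i, Y]u`; moreover `∂_{x_i} u ∈ C^{α − (ϑ+1)}`. -/
theorem position_derivative_as_commutator (d : ℕ) (hd : 1 ≤ d) (ϑ : ℝ) (hϑ : 0 < ϑ)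
    (α : ℝ) (hα : 1 + ϑ < α) (u : Pt d → ℝ) (hu : IsHolder ϑ α u) (i : Fin d) :
    (∀ z : Pt d,
      HasDerivAt (fun δ : ℝ => u (flowX (EuclideanSpace.single i 1) δ z))
        (dv i (lieY u) z - lieY (dv i u) z) 0) ∧
    (∀ z : Pt d, dx i u z = dv i (lieY u) z - lieY (dv i u) z) ∧
    IsHolder ϑ (α - (ϑ + 1)) (dx i u) := by
  obtain ⟨hY, hYu⟩ := hu.hasLieDeriv_and_isHolder_lieY hϑ (by linarith)
  obtain ⟨hZ, hZu⟩ := hu.hasLieDeriv_and_isHolder_dv hϑ (by linarith) i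
  obtain ⟨hYZ, hYZu⟩ := hZu.hasLieDeriv_and_isHolder_lieY hϑ (by linarith)
  obtain ⟨hZY, hZYu⟩ := hYu.hasLieDeriv_and_isHolder_dv hϑ (by linarith) i
  have commutator : HasLieDeriv (positionFlow (EuclideanSpace.single i 1)) u
      (dv i (lieY u) - lieY (dv i u)) :=
    (isHeisenberg_galilean _).hasLieDeriv_commutator hY hZ hYZ hZY
      (hu.continuous hϑ (by linarith)) (hYu.continuous hϑ (by linarith))
      (hZu.continuous hϑ (by linarith)) (hYZu.continuous hϑ (by linarith))
      (hZYu.continuous hϑ (by linarith))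
  have dx_eq : dx i u = dv i (lieY u) - lieY (dv i u) := commutator.lieDeriv_eq
  refine ⟨commutator, congr_fun dx_eq, ?_⟩
  rw [sub_sub, add_comm 1 ϑ] at hYZu
  rw [sub_sub] at hZYu
  exact dx_eq ▸ hZYu.sub hϑ hYZu

end
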